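/- Let b ≥ 0, m ≥ 0, let 2 ≤ ℓ ≤ b+m+1, and let n_1,…,n_ℓ be positive integers. Then (1/(n_1⋯n_ℓ))·{ Σ_{k=0}^{min(m,ℓ)} ((b+1)_{m−k}/(m−k)!) · e_{ℓ−k}(n_1−1,…,n_ℓ−1) + (−1)^{ℓ+1} · (b−ℓ+1)_m / m! } = C(b+m, b) + Σ_{i=1}^{min(b,ℓ−1)} (−1)^i · C(b+m−i, b−i) · e_i(1/n_1,…,1/n_ℓ), where (b−ℓ+1)_m = ∏_{i=0}^{m−1}(b−ℓ+1+i) (an integer, with possibly negative base) and C(·,·) is the binomial coefficient. -/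

import Mathlib

noncomputable section

/-- Value of the elementary symmetric polynomial `e_k` at the family `v` restricted to `A`. -/
def esymVal {α F : Type*} [DecidableEq α] [CommRing F] (A : Finset α) (k : ℕ) (v : α → F) : F :=
  ∑ B ∈ A.powersetCard k, ∏ i ∈ B, v i

/-- Pochhammer symbol `(a)_k = a (a+1) ⋯ (a+k-1)`. -/
def poch (a : ℚ) (k : ℕ) : ℚ := ∏ i ∈ Finset.range k, (a + (i : ℚ))

/-- The numbers `(a)_m / m!`. -/
def gco (a : ℚ) (m : ℕ) : ℚ := poch a m / (Nat.factorial m)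

theorem gco_zero (a : ℚ) : gco a 0 = 1 := by simp [gco, poch]

theorem poch_succ (a : ℚ) (m : ℕ) : poch a (m + 1) = poch a m * (a + m) := by
  simp [poch, Finset.prod_range_succ]

theorem poch_succ_left (a : ℚ) (m : ℕ) : poch (a - 1) (m + 1) = (a - 1) * poch a m := by
  unfold poch
  rw [Finset.prod_range_succ', mul_comm]
  congr 1
  · simp
  · apply Finset.prod_congr rfl
    intro i _
    push_cast
    ring

theorem gco_sub (a : ℚ) (m : ℕ) : gco a (m + 1) - gco a m = gco (a - 1) (m + 1) := by
  unfold gco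
  rw [poch_succ_left, poch_succ, Nat.factorial_succ]
  have h1 : (Nat.factorial m : ℚ) ≠ 0 := by exact_mod_cast Nat.factorial_ne_zero m
  have h2 : (m : ℚ) + 1 ≠ 0 := by positivity
  push_cast
  field_simp
  ring

theorem gco_nat (c m : ℕ) : gco ((c : ℚ) + 1) m = ((c + m).choose m : ℚ) := by
  induction m with
  | zero => simp [gco_zero]
  | succ m ih =>
    have h := Nat.add_one_mul_choose_eq (c + m) m
    have h' : ((c : ℚ) + m + 1) * ((c + m).choose m : ℚ)
        = ((c + (m + 1)).choose (m + 1) : ℚ) * (m + 1) := by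
      exact_mod_cast h
    have h1 : (Nat.factorial m : ℚ) ≠ 0 := by exact_mod_cast Nat.factorial_ne_zero m
    have h2 : (m : ℚ) + 1 ≠ 0 := by positivity
    rw [← ih] at h'
    unfold gco at h' ⊢
    rw [poch_succ, Nat.factorial_succ]
    push_cast
    field_simp at h' ⊢
    linear_combination h'

theorem gco_neg (d m : ℕ) (h : d < m) : gco (-(d : ℚ)) m = 0 := by
  unfold gco poch
  rw [Finset.prod_eq_zero (Finset.mem_range.2 h) (by ring), zero_div]

/-- Generating series of `gco a`. -/
def gser (a : ℚ) : PowerSeries ℚ := PowerSeries.mk (gco a)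

theorem gser_mul (a : ℚ) : (1 - PowerSeries.X) * gser a = gser (a - 1) := by
  ext m
  cases m with
  | zero => simp [gser, sub_mul, gco_zero]
  | succ m =>
    rw [sub_mul, one_mul, map_sub, PowerSeries.coeff_succ_X_mul]
    simp only [gser, PowerSeries.coeff_mk]
    exact gco_sub a m

theorem gser_pow_mul (a : ℚ) (i : ℕ) :
    (1 - PowerSeries.X) ^ i * gser a = gser (a - i) := by
  induction i with
  | zero => simp
  | succ i ih =>
    rw [pow_succ', mul_assoc, ih, gser_mul]
    push_cast
    congr 1
    ring

theorem esym_sum (A : Finset ℕ) (a : ℚ) (m : ℕ) (v : ℕ → ℚ) :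
    PowerSeries.coeff m ((∏ i ∈ A, (1 - PowerSeries.C (v i) * (1 - PowerSeries.X))) * gser a)
      = ∑ i ∈ Finset.range (A.card + 1), (-1) ^ i * gco (a - i) m * esymVal A i v := by
  simp only [sub_eq_add_neg (1 : PowerSeries ℚ) (_ * _)]
  rw [Finset.prod_one_add, Finset.sum_powerset, Finset.sum_mul, map_sum]
  apply Finset.sum_congr rfl
  intro i _
  unfold esymVal
  rw [Finset.sum_mul, map_sum, Finset.mul_sum]
  apply Finset.sum_congr rfl
  intro B hB
  have hc := (Finset.mem_powersetCard.1 hB).2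
  have : ∏ j ∈ B, -(PowerSeries.C (v j) * (1 - PowerSeries.X))
      = PowerSeries.C ((-1) ^ i * ∏ j ∈ B, v j) * (1 - PowerSeries.X) ^ i := by
    rw [Finset.prod_neg, Finset.prod_mul_distrib, Finset.prod_const, hc]
    simp [map_prod, mul_assoc]
  rw [this, mul_assoc, gser_pow_mul, PowerSeries.coeff_C_mul, gser, PowerSeries.coeff_mk]
  ring

theorem lhs_sum (A : Finset ℕ) (a : ℚ) (m : ℕ) (w : ℕ → ℚ) :
    ∑ k ∈ Finset.range (min m A.card + 1), gco a (m - k) * esymVal A (A.card - k) w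
      = PowerSeries.coeff m ((∏ i ∈ A, (PowerSeries.X + PowerSeries.C (w i))) * gser a) := by
  have hP : (∏ i ∈ A, (PowerSeries.X + PowerSeries.C (w i)))
      = ((∏ i ∈ A, (Polynomial.X + Polynomial.C (w i)) : Polynomial ℚ) : PowerSeries ℚ) := by
    rw [← Polynomial.coeToPowerSeries.ringHom_apply, map_prod]
    simp
  rw [hP, PowerSeries.coeff_mul, Finset.Nat.sum_antidiagonal_eq_sum_range_succ_mk]
  simp only [Polynomial.coeff_coe, gser, PowerSeries.coeff_mk]
  symm
  rw [← Finset.sum_subset (s₁ := Finset.range (min m A.card + 1)) (s₂ := Finset.range m.succ)]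
  · apply Finset.sum_congr rfl
    intro k hk
    have hk' : k ≤ A.card := by
      have := Finset.mem_range.1 hk
      omega
    rw [Finset.prod_X_add_C_coeff _ _ hk', mul_comm]
    rfl
  · intro k hk
    simp only [Finset.mem_range] at *
    omega
  · intro k hk hk'
    simp only [Finset.mem_range] at hk hk'
    rw [Polynomial.coeff_eq_zero_of_natDegree_lt, zero_mul]
    rw [Polynomial.natDegree_prod_of_monic _ _ (fun i _ => Polynomial.monic_X_add_C _)]
    simp
    omega

/-- Proposition 6.1: the equivalence of formulas (1.1) and (1.2). -/
theorem formula_equivalence (b m ℓ : ℕ) (hℓ2 : 2 ≤ ℓ) (hℓ : ℓ ≤ b + m + 1)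
    (n : ℕ → ℕ) (hn : ∀ i ∈ Finset.Icc 1 ℓ, 0 < n i) :
    (∏ i ∈ Finset.Icc 1 ℓ, (n i : ℚ))⁻¹ *
        ((∑ k ∈ Finset.range (min m ℓ + 1),
            poch ((b : ℚ) + 1) (m - k) / (Nat.factorial (m - k)) *
              esymVal (Finset.Icc 1 ℓ) (ℓ - k) (fun i => (n i : ℚ) - 1))
          + (-1 : ℚ) ^ (ℓ + 1) * poch ((b : ℚ) - (ℓ : ℚ) + 1) m / (Nat.factorial m))
      = ((b + m).choose b : ℚ)
        + ∑ i ∈ Finset.Icc 1 (min b (ℓ - 1)), (-1 : ℚ) ^ i * ((b + m - i).choose (b - i) : ℚ) *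
            esymVal (Finset.Icc 1 ℓ) i (fun j => ((n j : ℚ))⁻¹) := by
  have hcard : (Finset.Icc 1 ℓ).card = ℓ := by simp
  have hn0 : ∀ i ∈ Finset.Icc 1 ℓ, (n i : ℚ) ≠ 0 := fun i hi => by
    exact_mod_cast (hn i hi).ne'
  have hN : (∏ i ∈ Finset.Icc 1 ℓ, (n i : ℚ)) ≠ 0 := Finset.prod_ne_zero_iff.2 hn0
  have hL := lhs_sum (Finset.Icc 1 ℓ) ((b : ℚ) + 1) m (fun i => (n i : ℚ) - 1)
  have hR := esym_sum (Finset.Icc 1 ℓ) ((b : ℚ) + 1) m (fun i => (n i : ℚ)⁻¹)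
  have hprod : ∏ i ∈ Finset.Icc 1 ℓ, (PowerSeries.X + PowerSeries.C ((n i : ℚ) - 1))
      = PowerSeries.C (∏ i ∈ Finset.Icc 1 ℓ, (n i : ℚ)) *
        ∏ i ∈ Finset.Icc 1 ℓ, (1 - PowerSeries.C ((n i : ℚ)⁻¹) * (1 - PowerSeries.X)) := by
    rw [map_prod, ← Finset.prod_mul_distrib]
    apply Finset.prod_congr rfl
    intro i hi
    have h : PowerSeries.C (n i : ℚ) * PowerSeries.C ((n i : ℚ)⁻¹) = 1 := by
      rw [← map_mul, mul_inv_cancel₀ (hn0 i hi), map_one]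
    rw [map_sub, map_one]
    linear_combination (1 - PowerSeries.X) * h
  rw [hprod, mul_assoc, PowerSeries.coeff_C_mul, hR, hcard, Finset.sum_range_succ _ ℓ] at hL
  have hlast : esymVal (Finset.Icc 1 ℓ) ℓ (fun j => ((n j : ℚ))⁻¹)
      = (∏ i ∈ Finset.Icc 1 ℓ, (n i : ℚ))⁻¹ := by
    have := Finset.powersetCard_self (Finset.Icc 1 ℓ)
    rw [hcard] at this
    rw [esymVal, this, Finset.sum_singleton, Finset.prod_inv_distrib]
  have hsum : ∑ i ∈ Finset.range ℓ, (-1 : ℚ) ^ i * gco ((b : ℚ) + 1 - i) m *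
        esymVal (Finset.Icc 1 ℓ) i (fun j => ((n j : ℚ))⁻¹)
      = ((b + m).choose b : ℚ)
        + ∑ i ∈ Finset.Icc 1 (min b (ℓ - 1)), (-1 : ℚ) ^ i * ((b + m - i).choose (b - i) : ℚ) *
            esymVal (Finset.Icc 1 ℓ) i (fun j => ((n j : ℚ))⁻¹) := by
    have hg : ∀ i ≤ b, gco ((b : ℚ) + 1 - i) m = ((b + m - i).choose (b - i) : ℚ) := by
      intro i hi
      have h1 : (b : ℚ) + 1 - i = ((b - i : ℕ) : ℚ) + 1 := by
        rw [Nat.cast_sub hi]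
        ring
      have h2 : b + m - i = b - i + m := by omega
      rw [h1, gco_nat, h2, Nat.choose_symm_add]
    have h0 : ((b + m).choose b : ℚ) = (-1 : ℚ) ^ 0 * ((b + m - 0).choose (b - 0) : ℚ) *
            esymVal (Finset.Icc 1 ℓ) 0 (fun j => ((n j : ℚ))⁻¹) := by
      simp [esymVal]
    have hins : insert 0 (Finset.Icc 1 (min b (ℓ - 1))) = Finset.range (min b (ℓ - 1) + 1) := by
      ext x
      simp only [Finset.mem_insert, Finset.mem_Icc, Finset.mem_range]
      omega
    rw [h0, ← Finset.sum_insert (f := fun i => (-1 : ℚ) ^ i *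
      ((b + m - i).choose (b - i) : ℚ) *
            esymVal (Finset.Icc 1 ℓ) i (fun j => ((n j : ℚ))⁻¹)) (by simp), hins]
    symm
    apply Finset.sum_subset_zero_on_sdiff
    · intro x
      simp only [Finset.mem_range]
      omega
    · intro x hx
      simp only [Finset.mem_sdiff, Finset.mem_range] at hx
      have h1 : (b : ℚ) + 1 - x = -((x - b - 1 : ℕ) : ℚ) := by
        have : x = (x - b - 1) + b + 1 := by omega
        have h' : (x : ℚ) = ((x - b - 1 : ℕ) : ℚ) + b + 1 := by exact_mod_cast this
        linear_combination -h'
      rw [h1, gco_neg _ _ (by omega)]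
      ring
    · intro x hx
      simp only [Finset.mem_range] at hx
      rw [hg x (by omega)]
  rw [hsum, hlast] at hL
  have hL' : (∑ k ∈ Finset.range (min m ℓ + 1),
            poch ((b : ℚ) + 1) (m - k) / (Nat.factorial (m - k)) *
              esymVal (Finset.Icc 1 ℓ) (ℓ - k) (fun i => (n i : ℚ) - 1)) = _ := hL
  rw [hL']
  have hz : poch ((b : ℚ) - (ℓ : ℚ) + 1) m / (Nat.factorial m) = gco ((b : ℚ) + 1 - ℓ) m := by
    unfold gco
    congr 2
    ring
  rw [mul_div_assoc, hz]
  field_simp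
  ring

end
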